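/- Let 𝒜 be any first-order structure. Every finite semi-decidable subset of U_𝒜^∞ is decidable over 𝒜, and if moreover 𝒜 ∈ Struc_{c1,c2}, its characteristic function is computable by a BSS RAM in M_𝒜. -/

import Mathlib

/-!
A finite set `P` semi-decided by a deterministic machine `M` is already decided by running `M` for
a bounded number of steps: if `T` is at least the halting time of `M` on each of the finitely many
elements of `P`, then `x ∈ P` if and only if `M` has halted on `x` after `T` steps. It remains to
see that a BSS RAM can run `M` for exactly `T` steps, without comparing or storing elements of the
universe. As `T` is a fixed number, the clock is put into the labels: the program of `M` is
unrolled into `T` consecutive copies, one for each time `t < T`, and every instruction of copy `t`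
continues in copy `t + 1`. Leaving the program of `M` leads to a "yes" label, using up all the
copies leads to a "no" label, and the code placed there loops, stops or writes the required
constant (`clocked`, `clocked_reaches`).

The computations of a deterministic machine are the iterates of a total step function `detStep`
that fixes halted configurations, and any two fixed points on one orbit coincide
(`detStep_fixed_unique`); this yields both the uniqueness of the result and the divergence of a
computation that enters a one-instruction loop.
-/


/-!
A formalization of BSS RAMs over first-order structures (following C. Gaßner,
"Abstract computation over first-order structures", Part II b).

We model a first-order structure with indexed constants, operations and
relations, machines given by finite programs of labeled instructions
(including binary non-deterministic branching `orGoto` and Moschovakis'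
`ν`-operator instructions `nuGuess`), configurations, the (non-deterministic)
transition relation, halting sets, semi-decidability and decidability, the
various non-deterministic machine classes and their result functions.
-/

/-- A first-order structure: a universe together with indexed constants,
operations and relations. -/
structure FOStruct where
  U : Type
  constIdx : Type
  consts : constIdx → U
  opIdx : Type
  ops : opIdx → List U → U
  relIdx : Type
  rels : relIdx → List U → Prop

/-- `U^∞`: all finite nonempty tuples over the universe of `A`. -/
abbrev Tup (A : FOStruct) : Type := { l : List A.U // l ≠ [] }

/-- Instructions of BSS RAMs over `A`.  The first seven kinds are the
deterministic instruction types; `orGoto` is the binary non-deterministic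
branching instruction `goto ℓ₁ or goto ℓ₂`; `nuGuess j` is a ν-oracle
instruction writing a non-deterministically chosen tuple of the oracle set
into the registers `Z_j, Z_{j+1}, …`. -/
inductive Instr (A : FOStruct) : Type where
  | apply (j : ℕ) (i : A.opIdx) (args : List ℕ)
  | const (j : ℕ) (i : A.constIdx)
  | copy (j k : ℕ)
  | branchRel (i : A.relIdx) (args : List ℕ) (l₁ l₂ : ℕ)
  | branchIdx (j k l₁ l₂ : ℕ)
  | incIdx (j : ℕ)
  | resetIdx (j : ℕ)
  | orGoto (l₁ l₂ : ℕ)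
  | nuGuess (j : ℕ)

/-- A configuration: current label, index registers, and `Z`-registers. -/
structure Config (A : FOStruct) where
  label : ℕ
  idx : ℕ → ℕ
  reg : ℕ → A.U

/-- A machine: a finite program together with an oracle set (only used by
`nuGuess` instructions). -/
structure Machine (A : FOStruct) where
  prog : List (Instr A)
  oracle : Set (Tup A)

open scoped Classical in
/-- Execution of a deterministic instruction. -/
noncomputable def execDet {A : FOStruct} (ins : Instr A) (c : Config A) : Config A :=
  match ins with
  | .apply j i args =>
      { c with label := c.label + 1, reg := Function.update c.reg j (A.ops i (args.map c.reg)) }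
  | .const j i =>
      { c with label := c.label + 1, reg := Function.update c.reg j (A.consts i) }
  | .copy j k =>
      { c with label := c.label + 1, reg := Function.update c.reg (c.idx j) (c.reg (c.idx k)) }
  | .branchRel i args l₁ l₂ =>
      { c with label := if A.rels i (args.map c.reg) then l₁ else l₂ }
  | .branchIdx j k l₁ l₂ =>
      { c with label := if c.idx j = c.idx k then l₁ else l₂ }
  | .incIdx j =>
      { c with label := c.label + 1, idx := Function.update c.idx j (c.idx j + 1) }
  | .resetIdx j =>
      { c with label := c.label + 1, idx := Function.update c.idx j 1 }
  | .orGoto l₁ _ => { c with label := l₁ }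
  | .nuGuess _ => { c with label := c.label + 1 }

/-- Write the components of the list `l` into the registers `j, j+1, …`. -/
def writeFrom {A : FOStruct} (reg : ℕ → A.U) (j : ℕ) (l : List A.U) : ℕ → A.U :=
  fun i => if j ≤ i ∧ i - j < l.length then l.getD (i - j) (reg i) else reg i

/-- The (in general non-deterministic) one-step transition relation of `M`. -/
def NStep {A : FOStruct} (M : Machine A) (c c' : Config A) : Prop :=
  ∃ ins, M.prog[c.label]? = some ins ∧
    match ins with
    | Instr.orGoto l₁ l₂ => c' = { c with label := l₁ } ∨ c' = { c with label := l₂ }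
    | Instr.nuGuess j =>
        ∃ y ∈ M.oracle, c' = { c with label := c.label + 1, reg := writeFrom c.reg j y.1 }
    | _ => c' = execDet ins c

/-- Reachability of configurations. -/
def Reaches {A : FOStruct} (M : Machine A) : Config A → Config A → Prop :=
  Relation.ReflTransGen (NStep M)

/-- A configuration is halted if its label is the stop label (or beyond the
program). -/
def Halted {A : FOStruct} (M : Machine A) (c : Config A) : Prop := M.prog.length ≤ c.label

/-- Some computation of `M` starting in `c` reaches the stop instruction. -/
def HaltsFrom {A : FOStruct} (M : Machine A) (c : Config A) : Prop :=
  ∃ c', Reaches M c c' ∧ Halted M c'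

/-- The initial configuration for the input tuple `x` (single-valued input
function (I1)): `(1 . (n,1,…,1) . x . (x_n, x_n, …))`. -/
def inputConfig (A : FOStruct) (x : Tup A) : Config A :=
  { label := 0
    idx := fun j => if j = 1 then x.1.length else 1
    reg := fun i => x.1.getD i (x.1.getLast x.2) }

/-- The initial configuration for input `x` together with a guessed tuple `y`
(multi-valued input function (I3′)): `((n,1,…,1) . x . y . (x_n, x_n, …))`. -/
def inputConfigG (A : FOStruct) (x y : Tup A) : Config A :=
  { label := 0
    idx := fun j => if j = 1 then x.1.length else 1
    reg := fun i => (x.1 ++ y.1).getD i (x.1.getLast x.2) }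

/-- The output of a configuration: the tuple `(u_1, …, u_{ν₁})`. -/
def output {A : FOStruct} (c : Config A) : Tup A :=
  ⟨(List.range (max (c.idx 1) 1)).map c.reg, by
    intro hcon
    have h1 := congrArg List.length hcon
    simp only [List.length_map, List.length_range, List.length_nil] at h1
    omega⟩

/-- All outputs of halting computations of `M` starting in `c`. -/
def ResFrom {A : FOStruct} (M : Machine A) (c : Config A) : Set (Tup A) :=
  { z | ∃ c', Reaches M c c' ∧ Halted M c' ∧ output c' = z }

/-- The result function of `M` (for machines with input function (I1)). -/
def Res {A : FOStruct} (M : Machine A) (x : Tup A) : Set (Tup A) :=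
  ResFrom M (inputConfig A x)

/-- Deterministic instructions: neither `orGoto` nor `nuGuess`. -/
def Instr.isDet {A : FOStruct} : Instr A → Prop
  | .orGoto _ _ => False
  | .nuGuess _ => False
  | _ => True

/-- Instructions allowed in `M_A^{NDB}`-machines: no ν-instructions. -/
def Instr.noNu {A : FOStruct} : Instr A → Prop
  | .nuGuess _ => False
  | _ => True

/-- Instructions allowed in ν-oracle machines: no binary branching. -/
def Instr.noOr {A : FOStruct} : Instr A → Prop
  | .orGoto _ _ => False
  | _ => True

/-- `M` is a deterministic BSS RAM (a machine in `M_A`). -/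
def Machine.Det {A : FOStruct} (M : Machine A) : Prop := ∀ ins ∈ M.prog, ins.isDet

/-- `M` is a machine in `M_A^{NDB}` (binary non-deterministic branching
allowed). -/
def Machine.NDB {A : FOStruct} (M : Machine A) : Prop := ∀ ins ∈ M.prog, ins.noNu

/-- `M` is a ν-oracle machine in `M_A^ν(Q)`. -/
def Machine.NuMach {A : FOStruct} (M : Machine A) (Q : Set (Tup A)) : Prop :=
  (∀ ins ∈ M.prog, ins.noOr) ∧ M.oracle = Q

/-- `SDEC_A`: the class of problems semi-decidable by a deterministic
BSS RAM in `M_A`. -/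
def SDEC (A : FOStruct) : Set (Set (Tup A)) :=
  { P | ∃ M : Machine A, M.Det ∧ ∀ x, x ∈ P ↔ HaltsFrom M (inputConfig A x) }

/-- `DEC_A`: the class of decidable problems. -/
def DEC (A : FOStruct) : Set (Set (Tup A)) :=
  { P | P ∈ SDEC A ∧ Pᶜ ∈ SDEC A }

/-- `SDEC_A^{NDB}`: semi-decidability by machines with binary
non-deterministic branchings. -/
def SDECndb (A : FOStruct) : Set (Set (Tup A)) :=
  { P | ∃ M : Machine A, M.NDB ∧ ∀ x, x ∈ P ↔ HaltsFrom M (inputConfig A x) }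

/-- `(SDEC_A^ν)^Q`: semi-decidability by ν-oracle machines with oracle `Q`. -/
def SDECnu (A : FOStruct) (Q : Set (Tup A)) : Set (Set (Tup A)) :=
  { P | ∃ M : Machine A, M.NuMach Q ∧ ∀ x, x ∈ P ↔ HaltsFrom M (inputConfig A x) }

/-- A tuple is digital (w.r.t. `c₁, c₂`) if all its components are among the
two constants. -/
def Digital {A : FOStruct} (c₁ c₂ : A.U) (y : Tup A) : Prop := ∀ u ∈ y.1, u = c₁ ∨ u = c₂

/-- `SDEC_A^{ND}`: acceptance by machines guessing arbitrary tuples. -/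
def SDECnd (A : FOStruct) : Set (Set (Tup A)) :=
  { P | ∃ M : Machine A, M.Det ∧ ∀ x, x ∈ P ↔ ∃ y : Tup A, HaltsFrom M (inputConfigG A x y) }

/-- `SDEC_A^{DND}`: acceptance by digitally non-deterministic machines whose
guesses range over tuples of the two constants. -/
def SDECdnd (A : FOStruct) (c₁ c₂ : A.U) : Set (Set (Tup A)) :=
  { P | ∃ M : Machine A, M.Det ∧
      ∀ x, x ∈ P ↔ ∃ y : Tup A, Digital c₁ c₂ y ∧ HaltsFrom M (inputConfigG A x y) }

/-- The result function of a machine used non-deterministically with guesses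
ranging over all tuples. -/
def ResND {A : FOStruct} (M : Machine A) (x : Tup A) : Set (Tup A) :=
  { z | ∃ y : Tup A, z ∈ ResFrom M (inputConfigG A x y) }

/-- The result function of a digitally non-deterministic machine. -/
def ResDND {A : FOStruct} (c₁ c₂ : A.U) (M : Machine A) (x : Tup A) : Set (Tup A) :=
  { z | ∃ y : Tup A, Digital c₁ c₂ y ∧ z ∈ ResFrom M (inputConfigG A x y) }

/-- The identity relation `id_{U_A}` viewed as a decision problem
(the set of pairs `(x, x)`). -/
def idSet (A : FOStruct) : Set (Tup A) := { p | ∃ x : A.U, p.1 = [x, x] }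

/-- The one-component tuple `(c)`. -/
def singTup (A : FOStruct) (c : A.U) : Tup A := ⟨[c], by simp⟩

/-- The singleton `{c}` viewed as a decision problem. -/
def singSet (A : FOStruct) (c : A.U) : Set (Tup A) := { p | p.1 = [c] }

/-- The two-element set `{c₁, c₂}` viewed as a decision problem. -/
def constPair (A : FOStruct) (c₁ c₂ : A.U) : Set (Tup A) := { p | p.1 = [c₁] ∨ p.1 = [c₂] }

/-- `{c₁,c₂}^∞`: all finite nonempty tuples over the two constants. -/
def binTups (A : FOStruct) (c₁ c₂ : A.U) : Set (Tup A) := { p | ∀ u ∈ p.1, u = c₁ ∨ u = c₂ }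

/-- `{c₁,c₂}²`: all pairs over the two constants. -/
def pairTups (A : FOStruct) (c₁ c₂ : A.U) : Set (Tup A) :=
  { p | ∃ u v : A.U, (u = c₁ ∨ u = c₂) ∧ (v = c₁ ∨ v = c₂) ∧ p.1 = [u, v] }

open scoped Classical in
/-- The characteristic function `χ_P` with values `c₁` (yes) and `c₂` (no). -/
noncomputable def chi (A : FOStruct) (c₁ c₂ : A.U) (P : Set (Tup A)) (x : Tup A) : Tup A :=
  if x ∈ P then singTup A c₁ else singTup A c₂

/-- `M` (a deterministic BSS RAM) computes the total function `f`. -/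
def ComputesFn (A : FOStruct) (M : Machine A) (f : Tup A → Tup A) : Prop :=
  M.Det ∧ ∀ x, Res M x = {f x}

/-- `A` contains the identity relation `id_{U_A}` among its relations. -/
def HasIdRel (A : FOStruct) : Prop := ∃ r : A.relIdx, ∀ x y : A.U, A.rels r [x, y] ↔ x = y

/-- `c` is a constant of the structure `A`. -/
def HasConst (A : FOStruct) (c : A.U) : Prop := ∃ i : A.constIdx, A.consts i = c

/-- The class of result functions of deterministic machines. -/
def ResClassDet (A : FOStruct) : Set (Tup A → Set (Tup A)) :=
  { f | ∃ M : Machine A, M.Det ∧ f = Res M }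

/-- `{Res_M | M ∈ M_A^{NDB}}`. -/
def ResClassNDB (A : FOStruct) : Set (Tup A → Set (Tup A)) :=
  { f | ∃ M : Machine A, M.NDB ∧ f = Res M }

/-- `{Res_M | M ∈ M_A^ν(Q)}`. -/
def ResClassNu (A : FOStruct) (Q : Set (Tup A)) : Set (Tup A → Set (Tup A)) :=
  { f | ∃ M : Machine A, M.NuMach Q ∧ f = Res M }

/-- `{Res_M | M ∈ M_A^{ND}}`. -/
def ResClassND (A : FOStruct) : Set (Tup A → Set (Tup A)) :=
  { f | ∃ M : Machine A, M.Det ∧ f = ResND M }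

/-- `{Res_M | M ∈ M_A^{DND}}`. -/
def ResClassDND (A : FOStruct) (c₁ c₂ : A.U) : Set (Tup A → Set (Tup A)) :=
  { f | ∃ M : Machine A, M.Det ∧ f = ResDND c₁ c₂ M }

/-! ### Deterministic computations as iterations -/

/-- The total step function of a deterministic machine; halted configurations are fixed. -/
noncomputable def detStep {A : FOStruct} (M : Machine A) (c : Config A) : Config A :=
  match M.prog[c.label]? with
  | none => c
  | some ins => execDet ins c

lemma detStep_of_getElem? {A : FOStruct} {M : Machine A} {c : Config A} {ins : Instr A}
    (h : M.prog[c.label]? = some ins) : detStep M c = execDet ins c := by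
  simp [detStep, h]

lemma detStep_of_halted {A : FOStruct} {M : Machine A} {c : Config A} (h : Halted M c) :
    detStep M c = c := by
  have : M.prog[c.label]? = none := List.getElem?_eq_none h
  simp [detStep, this]

lemma nstep_execDet {A : FOStruct} {M : Machine A} (hM : M.Det) {c : Config A} {ins : Instr A}
    (h : M.prog[c.label]? = some ins) : NStep M c (execDet ins c) := by
  have hd := hM ins (List.mem_of_getElem? h)
  refine ⟨ins, h, ?_⟩
  cases ins <;> simp_all [Instr.isDet]

lemma detStep_of_nstep {A : FOStruct} {M : Machine A} (hM : M.Det) {c d : Config A}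
    (h : NStep M c d) : d = detStep M c := by
  obtain ⟨ins, hi, hd⟩ := h
  have hdet := hM ins (List.mem_of_getElem? hi)
  rw [detStep_of_getElem? hi]
  cases ins <;> simp_all [Instr.isDet]

lemma reaches_detStep {A : FOStruct} {M : Machine A} (hM : M.Det) (c : Config A) :
    Reaches M c (detStep M c) := by
  cases h : M.prog[c.label]? with
  | none =>
    have : detStep M c = c := by simp [detStep, h]
    rw [this]
    exact Relation.ReflTransGen.refl
  | some ins =>
    rw [detStep_of_getElem? h]
    exact Relation.ReflTransGen.single (nstep_execDet hM h)

lemma reaches_iff_iterate {A : FOStruct} {M : Machine A} (hM : M.Det) {c d : Config A} :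
    Reaches M c d ↔ ∃ n, d = (detStep M)^[n] c := by
  constructor
  · intro h
    induction h with
    | refl => exact ⟨0, rfl⟩
    | tail _ hs ih =>
      obtain ⟨n, rfl⟩ := ih
      exact ⟨n + 1, by rw [Function.iterate_succ_apply', detStep_of_nstep hM hs]⟩
  · rintro ⟨n, rfl⟩
    induction n with
    | zero => exact Relation.ReflTransGen.refl
    | succ n ih =>
      rw [Function.iterate_succ_apply']
      exact Relation.ReflTransGen.trans ih (reaches_detStep hM _)

/-- A deterministic computation has at most one fixed point: the later one on the orbit is an
iterate of the earlier one. -/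
lemma detStep_fixed_unique {A : FOStruct} {M : Machine A} (hM : M.Det) {c d e : Config A}
    (hd : Reaches M c d) (he : Reaches M c e) (fd : detStep M d = d) (fe : detStep M e = e) :
    d = e := by
  obtain ⟨m, rfl⟩ := (reaches_iff_iterate hM).1 hd
  obtain ⟨n, rfl⟩ := (reaches_iff_iterate hM).1 he
  calc (detStep M)^[m] c = (detStep M)^[n] ((detStep M)^[m] c) :=
        (Function.iterate_fixed fd n).symm
    _ = (detStep M)^[m] ((detStep M)^[n] c) := by
        rw [← Function.iterate_add_apply, ← Function.iterate_add_apply, Nat.add_comm]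
    _ = (detStep M)^[n] c := Function.iterate_fixed fe m

lemma resFrom_eq {A : FOStruct} {M : Machine A} (hM : M.Det) {c d : Config A}
    (hd : Reaches M c d) (hh : Halted M d) : ResFrom M c = {output d} := by
  ext z
  constructor
  · rintro ⟨e, he, hhe, rfl⟩
    rw [detStep_fixed_unique hM he hd (detStep_of_halted hhe) (detStep_of_halted hh)]
    rfl
  · rintro rfl
    exact ⟨d, hd, hh, rfl⟩

lemma halted_iterate_mono {A : FOStruct} {M : Machine A} {c : Config A} {m n : ℕ} (hmn : m ≤ n)
    (h : Halted M ((detStep M)^[m] c)) : Halted M ((detStep M)^[n] c) := by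
  obtain ⟨k, rfl⟩ := Nat.exists_eq_add_of_le hmn
  rw [Nat.add_comm, Function.iterate_add_apply, Function.iterate_fixed (detStep_of_halted h)]
  exact h

/-! ### Running a machine against a clock -/

/-- Unconditional jump, as a comparison of an index register with itself. -/
def jump (A : FOStruct) (l : ℕ) : Instr A := .branchIdx 0 0 l l

/-- Replace the explicit jump targets of a deterministic instruction. -/
def retarget {A : FOStruct} (f : ℕ → ℕ) : Instr A → Instr A
  | .branchRel i args l₁ l₂ => .branchRel i args (f l₁) (f l₂)
  | .branchIdx j k l₁ l₂ => .branchIdx j k (f l₁) (f l₂)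
  | ins => ins

/-- The label in the unrolled program at which "at time `t`, the original program of length `L` is
at label `l`" is represented. Each original instruction takes two slots, the second one being a
jump. The label following all the copies is "yes" (the original program was left), and the label
`k` places further is "no" (the time `T` is up). -/
def clockLabel (L T k t l : ℕ) : ℕ :=
  if l < L then (if t < T then 2 * (t * L + l) else 2 * (T * L) + k) else 2 * (T * L)

/-- The instruction at place `i` of the unrolled program: `i / 2` encodes the pair of a time and a
label, and the parity of `i` tells the instruction itself from the jump that follows it. -/
def clockInstr {A : FOStruct} (M : Machine A) (T k i : ℕ) : Instr A :=
  let t := i / 2 / M.prog.length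
  let l := i / 2 % M.prog.length
  if i % 2 = 0 then
    retarget (clockLabel M.prog.length T k (t + 1)) (M.prog.getD l (.resetIdx 0))
  else jump A (clockLabel M.prog.length T k (t + 1) (l + 1))

/-- `M` unrolled for `T` steps, followed by the code `tail`, which is entered at its place `0` if
`M` has halted within `T` steps and at its place `k` otherwise. -/
def clocked {A : FOStruct} (M : Machine A) (T k : ℕ) (tail : List (Instr A)) : Machine A where
  prog := (List.range (2 * (T * M.prog.length))).map (clockInstr M T k) ++ tail
  oracle := ∅

lemma retarget_isDet {A : FOStruct} (f : ℕ → ℕ) {ins : Instr A} (h : ins.isDet) :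
    (retarget f ins).isDet := by
  cases ins <;> simp_all [retarget, Instr.isDet]

lemma clocked_det {A : FOStruct} {M : Machine A} (hM : M.Det) (T k : ℕ) {tail : List (Instr A)}
    (ht : ∀ ins ∈ tail, ins.isDet) : (clocked M T k tail).Det := by
  intro ins hins
  rcases List.mem_append.1 hins with h | h
  · obtain ⟨i, -, rfl⟩ := List.mem_map.1 h
    unfold clockInstr
    dsimp only
    split_ifs
    · apply retarget_isDet
      rw [List.getD_eq_getElem?_getD]
      cases h : M.prog[i / 2 % M.prog.length]? with
      | none => trivial
      | some ins => exact hM ins (List.mem_of_getElem? h)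
    · trivial
  · exact ht ins h

lemma clocked_getElem?_lt {A : FOStruct} (M : Machine A) (T k : ℕ) (tail : List (Instr A)) {i : ℕ}
    (hi : i < 2 * (T * M.prog.length)) :
    (clocked M T k tail).prog[i]? = some (clockInstr M T k i) := by
  simp [clocked, List.getElem?_append_left, hi]

lemma clocked_getElem?_tail {A : FOStruct} (M : Machine A) (T k : ℕ) (tail : List (Instr A))
    (i : ℕ) : (clocked M T k tail).prog[2 * (T * M.prog.length) + i]? = tail[i]? := by
  simp [clocked, List.getElem?_append_right]

/-- The configuration of the unrolled machine that represents the configuration `c` of `M` at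
time `t`. -/
def clockConfig {A : FOStruct} (M : Machine A) (T k t : ℕ) (c : Config A) : Config A :=
  { c with label := clockLabel M.prog.length T k t c.label }

lemma clocked_step {A : FOStruct} {M : Machine A} (hM : M.Det) (T k : ℕ) {tail : List (Instr A)}
    (ht : ∀ ins ∈ tail, ins.isDet) {t : ℕ} (htT : t < T) (c : Config A) :
    Reaches (clocked M T k tail) (clockConfig M T k t c)
      (clockConfig M T k (t + 1) (detStep M c)) := by
  have hdet := clocked_det hM T k ht
  by_cases hl : c.label < M.prog.length
  · set L := M.prog.length with hL
    have hget : M.prog[c.label]? = some M.prog[c.label] := List.getElem?_eq_getElem hl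
    have hinsdet := hM _ (List.mem_of_getElem? hget)
    rw [detStep_of_getElem? hget]
    have hlt : t * L + c.label < T * L := by nlinarith
    have hLpos : 0 < L := by omega
    have hdiv : (t * L + c.label) / L = t := by
      rw [Nat.add_comm, Nat.add_mul_div_right _ _ hLpos, Nat.div_eq_of_lt hl, Nat.zero_add]
    have hmod : (t * L + c.label) % L = c.label := by
      rw [Nat.add_comm, Nat.add_mul_mod_self_right, Nat.mod_eq_of_lt hl]
    have hpos : clockLabel L T k t c.label = 2 * (t * L + c.label) := by
      simp [clockLabel, hl, htT]
    have h₁ : (clocked M T k tail).prog[2 * (t * L + c.label)]? =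
        some (retarget (clockLabel L T k (t + 1)) M.prog[c.label]) := by
      rw [clocked_getElem?_lt M T k tail (by rw [← hL]; omega)]
      have e1 : 2 * (t * L + c.label) / 2 = t * L + c.label := by omega
      have e2 : 2 * (t * L + c.label) % 2 = 0 := by omega
      simp only [clockInstr, e1, e2, ← hL, hdiv, hmod, if_true]
      rw [List.getD_eq_getElem?_getD, hget, Option.getD_some]
    have h₂ : (clocked M T k tail).prog[2 * (t * L + c.label) + 1]? =
        some (jump A (clockLabel L T k (t + 1) (c.label + 1))) := by
      rw [clocked_getElem?_lt M T k tail (by rw [← hL]; omega)]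
      have e1 : (2 * (t * L + c.label) + 1) / 2 = t * L + c.label := by omega
      have e2 : ¬ (2 * (t * L + c.label) + 1) % 2 = 0 := by omega
      simp only [clockInstr, e1, if_neg e2, ← hL, hdiv, hmod]
    have hc : (clockConfig M T k t c).label = 2 * (t * L + c.label) := hpos
    have s₁ := nstep_execDet hdet (c := clockConfig M T k t c) (by rw [hc]; exact h₁)
    have s₂ : ∀ (ix : ℕ → ℕ) (rg : ℕ → A.U), NStep (clocked M T k tail)
        ⟨2 * (t * L + c.label) + 1, ix, rg⟩ ⟨clockLabel L T k (t + 1) (c.label + 1), ix, rg⟩ := by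
      intro ix rg
      have := nstep_execDet hdet (c := ⟨2 * (t * L + c.label) + 1, ix, rg⟩) h₂
      simpa [jump, execDet] using this
    generalize M.prog[c.label] = ins at s₁ hinsdet
    -- A branching instruction already jumps into the next copy; any other one needs the second
    -- slot.
    cases ins with
    | branchRel i args l₁ l₂ =>
      refine Relation.ReflTransGen.single ?_
      convert s₁ using 1
      by_cases hr : A.rels i (args.map c.reg) <;>
        simp [execDet, retarget, clockConfig, ← hL, hr]
    | branchIdx j k' l₁ l₂ =>
      refine Relation.ReflTransGen.single ?_
      convert s₁ using 1
      simp only [execDet, retarget, clockConfig, ← hL]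
      split_ifs <;> rfl
    | orGoto l₁ l₂ => exact hinsdet.elim
    | nuGuess j => exact hinsdet.elim
    | _ =>
      refine Relation.ReflTransGen.head s₁ (Relation.ReflTransGen.single ?_)
      simp only [execDet, retarget, clockConfig, ← hL, hpos]
      exact s₂ _ _
  · have hh : Halted M c := Nat.le_of_not_lt hl
    rw [detStep_of_halted hh]
    have : clockConfig M T k (t + 1) c = clockConfig M T k t c := by
      simp [clockConfig, clockLabel, hl]
    rw [this]
    exact Relation.ReflTransGen.refl

open scoped Classical in
/-- The unrolled machine reaches the "yes" or the "no" label according to whether `M` halts within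
`T` steps. The assumption `0 < T` ensures that the unrolled program starts with a copy of `M`. -/
lemma clocked_reaches {A : FOStruct} {M : Machine A} (hM : M.Det) {T : ℕ} (hT : 0 < T) (k : ℕ)
    {tail : List (Instr A)} (ht : ∀ ins ∈ tail, ins.isDet) (x : Tup A) :
    ∃ (ix : ℕ → ℕ) (rg : ℕ → A.U), Reaches (clocked M T k tail) (inputConfig A x)
      ⟨2 * (T * M.prog.length) +
        if Halted M ((detStep M)^[T] (inputConfig A x)) then 0 else k, ix, rg⟩ := by
  have key : ∀ t ≤ T, Reaches (clocked M T k tail) (inputConfig A x)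
      (clockConfig M T k t ((detStep M)^[t] (inputConfig A x))) := by
    intro t
    induction t with
    | zero =>
      intro _
      have : clockConfig M T k 0 (inputConfig A x) = inputConfig A x := by
        have hz : clockLabel M.prog.length T k 0 0 = 0 := by
          unfold clockLabel
          split_ifs with h
          · simp
          · have : M.prog.length = 0 := by omega
            simp [this]
        simp [clockConfig, inputConfig, hz]
      rw [Function.iterate_zero_apply, this]
      exact Relation.ReflTransGen.refl
    | succ t ih =>
      intro hle
      rw [Function.iterate_succ_apply']
      exact Relation.ReflTransGen.trans (ih (by omega)) (clocked_step hM T k ht (by omega) _)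
  have := key T le_rfl
  set d := (detStep M)^[T] (inputConfig A x)
  refine ⟨d.idx, d.reg, ?_⟩
  convert this using 1
  by_cases h : Halted M d
  · have h' : ¬ d.label < M.prog.length := Nat.not_lt.2 h
    simp [clockConfig, clockLabel, h, h']
  · have h' : d.label < M.prog.length := Nat.lt_of_not_le h
    simp [clockConfig, clockLabel, h, h']

/-! ### Finite semi-decidable sets -/

/-- On a finite halting set the halting times are bounded. -/
lemma exists_time_bound {A : FOStruct} {P : Set (Tup A)} (hfin : P.Finite) {M : Machine A}
    (hM : M.Det) (hP : ∀ x, x ∈ P ↔ HaltsFrom M (inputConfig A x)) :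
    ∃ T, 0 < T ∧ ∀ x, x ∈ P ↔ Halted M ((detStep M)^[T] (inputConfig A x)) := by
  have h : ∀ x, ∃ n, x ∈ P → Halted M ((detStep M)^[n] (inputConfig A x)) := by
    intro x
    by_cases hx : x ∈ P
    · obtain ⟨d, hd, hh⟩ := (hP x).1 hx
      obtain ⟨n, rfl⟩ := (reaches_iff_iterate hM).1 hd
      exact ⟨n, fun _ => hh⟩
    · exact ⟨0, fun h => absurd h hx⟩
  choose time htime using h
  refine ⟨hfin.toFinset.sup time + 1, Nat.succ_pos _, fun x => ⟨fun hx => ?_, fun hx => ?_⟩⟩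
  · refine halted_iterate_mono ?_ (htime x hx)
    exact (Finset.le_sup (hfin.mem_toFinset.2 hx)).trans (Nat.le_succ _)
  · exact (hP x).2 ⟨_, (reaches_iff_iterate hM).2 ⟨_, rfl⟩, hx⟩

lemma compl_mem_SDEC {A : FOStruct} {P : Set (Tup A)} {M : Machine A} (hM : M.Det) {T : ℕ}
    (hT : 0 < T) (hP : ∀ x, x ∈ P ↔ Halted M ((detStep M)^[T] (inputConfig A x))) :
    Pᶜ ∈ SDEC A := by
  classical
  set N := 2 * (T * M.prog.length) with hN
  -- "Yes" is a one-instruction loop and "no" is the stop label.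
  have ht : ∀ ins ∈ [jump A N], ins.isDet := by simp [jump, Instr.isDet]
  have hdet := clocked_det hM T 1 ht
  have hlen : (clocked M T 1 [jump A N]).prog.length = N + 1 := by simp [clocked, hN]
  refine ⟨clocked M T 1 [jump A N], hdet, fun x => ?_⟩
  obtain ⟨ix, rg, hr⟩ := clocked_reaches hM hT 1 ht x
  rw [← hN, ← hP x] at hr
  by_cases hx : x ∈ P
  · rw [if_pos hx, Nat.add_zero] at hr
    refine ⟨fun h => absurd hx h, ?_⟩
    rintro ⟨e, he, hh⟩
    have hloop : detStep (clocked M T 1 [jump A N]) ⟨N, ix, rg⟩ = ⟨N, ix, rg⟩ := by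
      have h0 := clocked_getElem?_tail M T 1 [jump A N] 0
      rw [detStep_of_getElem? (ins := jump A N) (by simpa using h0)]
      simp [jump, execDet]
    rw [← detStep_fixed_unique hdet hr he hloop (detStep_of_halted hh)] at hh
    simp only [Halted, hlen] at hh
    omega
  · rw [if_neg hx] at hr
    refine ⟨fun _ => ⟨_, hr, ?_⟩, fun _ => hx⟩
    simp [Halted, hlen]

lemma exists_computesFn_chi {A : FOStruct} {P : Set (Tup A)} {M : Machine A} (hM : M.Det) {T : ℕ}
    (hT : 0 < T) (hP : ∀ x, x ∈ P ↔ Halted M ((detStep M)^[T] (inputConfig A x)))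
    (i₁ i₂ : A.constIdx) :
    ∃ M' : Machine A, ComputesFn A M' (chi A (A.consts i₁) (A.consts i₂) P) := by
  classical
  set N := 2 * (T * M.prog.length) with hN
  -- "Yes" is place `0` and "no" is place `3`; place `5` is the stop label. The first output
  -- register is `Z`-register `0`, and index register `1` holds the output length.
  set tail : List (Instr A) :=
    [.const 0 i₁, .resetIdx 1, jump A (N + 5), .const 0 i₂, .resetIdx 1] with htail
  have ht : ∀ ins ∈ tail, ins.isDet := by simp [htail, jump, Instr.isDet]
  have hdet := clocked_det hM T 3 ht
  have hlen : (clocked M T 3 tail).prog.length = N + 5 := by simp [clocked, hN, htail]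
  have hstep : ∀ (i : ℕ) (ins : Instr A), tail[i]? = some ins → ∀ ix rg,
      NStep (clocked M T 3 tail) ⟨N + i, ix, rg⟩ (execDet ins ⟨N + i, ix, rg⟩) := by
    intro i ins hi ix rg
    exact nstep_execDet hdet ((clocked_getElem?_tail M T 3 tail i).trans hi)
  have hout : ∀ (ix : ℕ → ℕ) (rg : ℕ → A.U) (u : A.U),
      output (⟨N + 5, Function.update ix 1 1, Function.update rg 0 u⟩ : Config A) =
        singTup A u := by
    intro ix rg u
    apply Subtype.ext
    simp [output, singTup]
  refine ⟨clocked M T 3 tail, hdet, fun x => ?_⟩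
  obtain ⟨ix, rg, hr⟩ := clocked_reaches hM hT 3 ht x
  rw [← hN, ← hP x] at hr
  by_cases hx : x ∈ P
  · rw [if_pos hx] at hr
    have s₀ := hstep 0 (.const 0 i₁) rfl ix rg
    have s₁ := hstep 1 (.resetIdx 1) rfl ix (Function.update rg 0 (A.consts i₁))
    have s₂ := hstep 2 (jump A (N + 5)) rfl (Function.update ix 1 1)
      (Function.update rg 0 (A.consts i₁))
    simp only [execDet, jump, if_true] at s₀ s₁ s₂
    rw [chi, if_pos hx, ← hout ix rg]
    exact resFrom_eq hdet (((hr.tail s₀).tail s₁).tail s₂) (by simp [Halted, hlen])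
  · rw [if_neg hx] at hr
    have s₀ := hstep 3 (.const 0 i₂) rfl ix rg
    have s₁ := hstep 4 (.resetIdx 1) rfl ix (Function.update rg 0 (A.consts i₂))
    simp only [execDet] at s₀ s₁
    rw [chi, if_neg hx, ← hout ix rg]
    exact resFrom_eq hdet ((hr.tail s₀).tail s₁) (by simp [Halted, hlen])

/-- Every finite semi-decidable subset of `U_A^∞` is
decidable over `A`, and if moreover `A ∈ Struc_{c₁,c₂}`, its characteristic
function is computable by a BSS RAM in `M_A`. -/
theorem finite_semidecidable_is_decidable
    (A : FOStruct) (P : Set (Tup A)) (hfin : P.Finite) (hP : P ∈ SDEC A) :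
    P ∈ DEC A ∧
    ∀ c₁ c₂ : A.U, HasConst A c₁ → HasConst A c₂ → c₁ ≠ c₂ →
      ∃ M : Machine A, ComputesFn A M (chi A c₁ c₂ P) := by
  obtain ⟨M, hM, hPM⟩ := id hP
  obtain ⟨T, hT, hPT⟩ := exists_time_bound hfin hM hPM
  refine ⟨⟨hP, compl_mem_SDEC hM hT hPT⟩, ?_⟩
  rintro _ _ ⟨i₁, rfl⟩ ⟨i₂, rfl⟩ -
  exact exists_computesFn_chi hM hT hPT i₁ i₂
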